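/- arXiv:2103.03791 — 3 statements merged into one kernel-verified Lean document; each statement's English description precedes it below -/
import Mathlib

section
/- For every integer k with k ≥ 2mρ, the k-th Fourier coefficient of e^{2 Im g_+} satisfies |(1/2π) ∫_{−π}^{π} e^{2 Im g_+(θ)} e^{−ikθ} dθ| ≤ 2 e^{ρ} · ρ^{⌈k/m⌉} / ⌈k/m⌉!. -/
open Real MeasureTheory

noncomputable section

lemma aux_entire (H : ℂ → ℂ) (hH : Differentiable ℂ H) :
    ∫ θ in (-π)..π, Complex.exp (Complex.I * θ) * H (Complex.exp (Complex.I * θ)) = 0 := by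
  have h0 : (∮ z in C(0, 1), H z) = 0 :=
    Complex.circleIntegral_eq_zero_of_differentiable_on_off_countable zero_le_one
      Set.countable_empty hH.continuous.continuousOn (fun z _ => hH z)
  rw [circleIntegral] at h0
  simp only [deriv_circleMap, smul_eq_mul] at h0
  have h1 : ∀ θ : ℝ, circleMap 0 1 θ * Complex.I * H (circleMap 0 1 θ)
      = Complex.I * (Complex.exp (Complex.I * θ) * H (Complex.exp (Complex.I * θ))) := by
    intro θ
    simp only [circleMap, zero_add, Complex.ofReal_one, one_mul, mul_comm (θ : ℂ)]
    ring
  simp only [h1] at h0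
  rw [intervalIntegral.integral_const_mul] at h0
  have h2 := (mul_eq_zero.mp h0).resolve_left Complex.I_ne_zero
  have hper : Function.Periodic (fun θ : ℝ =>
      Complex.exp (Complex.I * θ) * H (Complex.exp (Complex.I * θ))) (2 * π) := by
    intro θ
    have : Complex.exp (Complex.I * ((θ + 2 * π : ℝ) : ℂ)) = Complex.exp (Complex.I * θ) := by
      push_cast
      rw [mul_add, Complex.exp_add, mul_comm Complex.I (2 * (π : ℂ)), Complex.exp_two_pi_mul_I,
        mul_one]
    simp only [this]
  have h3 := hper.intervalIntegral_add_eq (-π) 0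
  rw [zero_add, h2] at h3
  rw [← h3]
  congr 1
  ring

lemma aux_vanish (m : ℕ) (c : Fin m → ℝ) (k n : ℕ) (hn : n * m < k) :
    ∫ θ in (-π)..π, (-Complex.I * ∑ j : Fin m, (c j : ℂ) * Complex.exp (Complex.I * (j.1 + 1) * θ)) ^ n
        / (n.factorial : ℂ)
      * (Complex.exp (Complex.I * ∑ j : Fin m, (c j : ℂ) * Complex.exp (-Complex.I * (j.1 + 1) * θ))
      * Complex.exp (-Complex.I * k * θ)) = 0 := by
  have key := aux_entire (fun z => z ^ (k - 1 - n * m) *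
      ((-Complex.I * ∑ j : Fin m, (c j : ℂ) * z ^ (m - (j.1 + 1))) ^ n / (n.factorial : ℂ)
      * Complex.exp (Complex.I * ∑ j : Fin m, (c j : ℂ) * z ^ (j.1 + 1)))) (by fun_prop)
  have hneg := intervalIntegral.integral_comp_neg (a := -π) (b := π) (fun θ : ℝ =>
    (-Complex.I * ∑ j : Fin m, (c j : ℂ) * Complex.exp (Complex.I * (j.1 + 1) * θ)) ^ n
        / (n.factorial : ℂ)
      * (Complex.exp (Complex.I * ∑ j : Fin m, (c j : ℂ) * Complex.exp (-Complex.I * (j.1 + 1) * θ))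
      * Complex.exp (-Complex.I * k * θ)))
  rw [neg_neg] at hneg
  rw [← hneg, ← key]
  congr 1
  ext θ
  set z := Complex.exp (Complex.I * θ) with hz
  have hz0 : z ≠ 0 := Complex.exp_ne_zero _
  have e1 : ∀ j : Fin m, Complex.exp (-Complex.I * (j.1 + 1) * ((-θ : ℝ) : ℂ)) = z ^ (j.1 + 1) := by
    intro j
    rw [hz, ← Complex.exp_nat_mul]
    congr 1
    push_cast
    ring
  have e2 : Complex.exp (-Complex.I * k * ((-θ : ℝ) : ℂ)) = z ^ k := by
    rw [hz, ← Complex.exp_nat_mul]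
    congr 1
    push_cast
    ring
  have e3 : ∀ j : Fin m, z ^ (m - (j.1 + 1))
      = z ^ m * Complex.exp (Complex.I * (j.1 + 1) * ((-θ : ℝ) : ℂ)) := by
    intro j
    rw [hz, ← Complex.exp_nat_mul, ← Complex.exp_nat_mul, ← Complex.exp_add]
    congr 1
    rw [Nat.cast_sub (by omega)]
    push_cast
    ring
  have e4 : ∑ j : Fin m, (c j : ℂ) * z ^ (m - (j.1 + 1)) = z ^ m *
      ∑ j : Fin m, (c j : ℂ) * Complex.exp (Complex.I * (j.1 + 1) * ((-θ : ℝ) : ℂ)) := by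
    rw [Finset.mul_sum]
    refine Finset.sum_congr rfl fun j _ => ?_
    rw [e3]; ring
  simp only [e1, e2, e4]
  have e5 : z ^ k = z * z ^ (k - 1 - n * m) * (z ^ m) ^ n := by
    rw [← pow_mul, ← pow_succ', ← pow_add]
    congr 1
    rw [mul_comm m n]
    omega
  rw [e5, mul_left_comm _ (z ^ m), mul_pow (z ^ m)]
  ring

lemma aux_l1 (m : ℕ) (hm : 1 ≤ m) (ξ : EuclideanSpace ℝ (Fin m)) :
    ∑ j : Fin m, |ξ j / Real.sqrt (j.1 + 1)| ≤ Real.sqrt (Real.log m + 1) * ‖ξ‖ := by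
  have h1 : ∑ j : Fin m, |ξ j / Real.sqrt (j.1 + 1)|
      = ∑ j : Fin m, (1 / Real.sqrt (j.1 + 1)) * |ξ j| := by
    refine Finset.sum_congr rfl fun j _ => ?_
    rw [abs_div, abs_of_nonneg (Real.sqrt_nonneg _)]; ring
  rw [h1]
  refine (Real.sum_mul_le_sqrt_mul_sqrt _ _ _).trans ?_
  rw [EuclideanSpace.norm_eq]
  simp only [Real.norm_eq_abs]
  refine mul_le_mul_of_nonneg_right (Real.sqrt_le_sqrt ?_) (Real.sqrt_nonneg _)
  have h2 := harmonic_le_one_add_log m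
  rw [harmonic] at h2
  push_cast at h2
  rw [Finset.sum_range] at h2
  rw [add_comm]
  refine le_trans (le_of_eq ?_) h2
  refine Finset.sum_congr rfl fun j _ => ?_
  rw [div_pow, Real.sq_sqrt (by positivity)]
  simp

/-- **Lemma (bound on Fourier coefficients of `e^{2 Im g₊}`).**
Here `Im g₊(θ) = ∑_{k=1}^m (ξ_k/√k) sin(kθ)` and `ρ = √(log m + 1)·‖ξ‖`. -/
theorem fourier_coefficient_bound (m : ℕ) (hm : 1 ≤ m) (ξ : EuclideanSpace ℝ (Fin m))
    (ρ : ℝ) (hρ : ρ = Real.sqrt (Real.log m + 1) * ‖ξ‖)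
    (k : ℕ) (hk : 2 * m * ρ ≤ (k : ℝ)) :
    ‖(1 / (2 * π) : ℂ) * ∫ θ in (-π)..π,
        (Real.exp (2 * ∑ j : Fin m, ξ j / Real.sqrt (j.1 + 1)
            * Real.sin ((j.1 + 1) * θ)) : ℂ)
          * Complex.exp (-Complex.I * k * θ)‖
      ≤ 2 * Real.exp ρ * ρ ^ ⌈(k : ℝ) / m⌉₊ / (⌈(k : ℝ) / m⌉₊).factorial := by
  set N := ⌈(k : ℝ) / m⌉₊ with hN
  have hmpos : (0 : ℝ) < m := by exact_mod_cast hm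
  have hρ0 : 0 ≤ ρ := by rw [hρ]; positivity
  have hl1 := aux_l1 m hm ξ
  rw [← hρ] at hl1
  obtain ⟨c, hc⟩ : ∃ c : Fin m → ℝ, c = fun j => ξ j / Real.sqrt (j.1 + 1) := ⟨_, rfl⟩
  have hcj : ∀ j : Fin m, ξ j / Real.sqrt (j.1 + 1) = c j := fun j => by rw [hc]
  simp only [hcj] at hl1 ⊢
  obtain ⟨g, hg⟩ : ∃ g : ℝ → ℂ, g = fun θ : ℝ => -Complex.I *
    ∑ j : Fin m, (c j : ℂ) * Complex.exp (Complex.I * (j.1 + 1) * θ) := ⟨_, rfl⟩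
  obtain ⟨h, hh⟩ : ∃ h : ℝ → ℂ, h = fun θ : ℝ => Complex.I *
    ∑ j : Fin m, (c j : ℂ) * Complex.exp (-Complex.I * (j.1 + 1) * θ) := ⟨_, rfl⟩
  have hgc : Continuous g := by rw [hg]; fun_prop
  have hhc : Continuous h := by rw [hh]; fun_prop
  have hgn : ∀ θ, ‖g θ‖ ≤ ρ := by
    intro θ
    simp only [hg]
    rw [norm_mul, norm_neg, Complex.norm_I, one_mul]
    refine (norm_sum_le _ _).trans (le_trans (le_of_eq ?_) hl1)
    refine Finset.sum_congr rfl fun j _ => ?_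
    rw [norm_mul, Complex.norm_real, Real.norm_eq_abs, Complex.norm_exp]
    simp
  have hhn : ∀ θ, ‖h θ‖ ≤ ρ := by
    intro θ
    simp only [hh]
    rw [norm_mul, Complex.norm_I, one_mul]
    refine (norm_sum_le _ _).trans (le_trans (le_of_eq ?_) hl1)
    refine Finset.sum_congr rfl fun j _ => ?_
    rw [norm_mul, Complex.norm_real, Real.norm_eq_abs, Complex.norm_exp]
    simp
  have hsplit : ∀ θ : ℝ, (Real.exp (2 * ∑ j : Fin m, c j * Real.sin ((j.1 + 1) * θ)) : ℂ)
      = Complex.exp (g θ) * Complex.exp (h θ) := by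
    intro θ
    rw [← Complex.exp_add, Complex.ofReal_exp]
    congr 1
    simp only [hg, hh]
    push_cast
    rw [Finset.mul_sum, Finset.mul_sum, Finset.mul_sum, ← Finset.sum_add_distrib]
    refine Finset.sum_congr rfl fun j _ => ?_
    rw [Complex.sin]
    rw [show Complex.I * ((j.1 : ℂ) + 1) * θ = ((j.1 : ℂ) + 1) * θ * Complex.I by ring,
      show -Complex.I * ((j.1 : ℂ) + 1) * θ = -(((j.1 : ℂ) + 1) * θ) * Complex.I by ring]
    ring
  have hvan : ∫ θ in (-π)..π, (∑ n ∈ Finset.range N, g θ ^ n / (n.factorial : ℂ))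
      * (Complex.exp (h θ) * Complex.exp (-Complex.I * k * θ)) = 0 := by
    simp only [Finset.sum_mul]
    rw [intervalIntegral.integral_finsetSum]
    · refine Finset.sum_eq_zero fun n hn => ?_
      simp only [hg, hh]
      refine aux_vanish m c k n ?_
      have h1 := Nat.lt_ceil.mp (Finset.mem_range.mp hn)
      rw [lt_div_iff₀ hmpos] at h1
      exact_mod_cast h1
    · intro n _
      apply Continuous.intervalIntegrable
      fun_prop
  have hI : ∫ θ in (-π)..π, (Real.exp (2 * ∑ j : Fin m, c j * Real.sin ((j.1 + 1) * θ)) : ℂ)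
          * Complex.exp (-Complex.I * k * θ)
      = ∫ θ in (-π)..π, (Complex.exp (g θ) - ∑ n ∈ Finset.range N, g θ ^ n / (n.factorial : ℂ))
      * (Complex.exp (h θ) * Complex.exp (-Complex.I * k * θ)) := by
    simp only [sub_mul]
    rw [intervalIntegral.integral_sub, hvan, sub_zero]
    · simp only [hsplit, mul_assoc]
    · apply Continuous.intervalIntegrable
      fun_prop
    · apply Continuous.intervalIntegrable
      fun_prop
  have hρN : ρ / (N.succ : ℝ) ≤ 1 / 2 := by
    have h1 : (k : ℝ) / m ≤ N := Nat.le_ceil _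
    rw [div_le_iff₀ hmpos] at h1
    have h2 : 2 * ρ ≤ N := by
      by_contra hcon
      push Not at hcon
      nlinarith
    rw [div_le_iff₀ (by positivity)]
    push_cast
    linarith
  have hbound : ∀ θ : ℝ, ‖(Complex.exp (g θ) - ∑ n ∈ Finset.range N, g θ ^ n / (n.factorial : ℂ))
      * (Complex.exp (h θ) * Complex.exp (-Complex.I * k * θ))‖
      ≤ 2 * Real.exp ρ * ρ ^ N / N.factorial := by
    intro θ
    have b1 := Complex.exp_bound' (x := g θ) (n := N)
      ((div_le_div_of_nonneg_right (hgn θ) (by positivity)).trans hρN)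
    have b2 : ‖g θ‖ ^ N / N.factorial * 2 ≤ ρ ^ N / N.factorial * 2 := by
      gcongr
      exact hgn θ
    have b3 : ‖Complex.exp (h θ)‖ ≤ Real.exp ρ :=
      (Complex.norm_exp_le_exp_norm _).trans (Real.exp_le_exp.mpr (hhn θ))
    have b4 : ‖Complex.exp (-Complex.I * k * θ)‖ = 1 := by
      rw [Complex.norm_exp]; simp
    rw [norm_mul, norm_mul, b4, mul_one]
    calc _ ≤ (ρ ^ N / N.factorial * 2) * Real.exp ρ :=
          mul_le_mul (b1.trans b2) b3 (norm_nonneg _) (by positivity)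
      _ = _ := by ring
  rw [hI, norm_mul]
  have hfin := intervalIntegral.norm_integral_le_of_norm_le_const (a := -π) (b := π)
    (fun θ _ => hbound θ)
  have hpi : |π - -π| = 2 * π := by
    rw [sub_neg_eq_add, abs_of_pos (by positivity)]; ring
  rw [hpi] at hfin
  have hn : ‖(1 / (2 * π) : ℂ)‖ = 1 / (2 * π) := by
    rw [norm_div, norm_mul, Complex.norm_real, Real.norm_eq_abs, abs_of_pos Real.pi_pos]
    simp
  rw [hn]
  calc _ ≤ 1 / (2 * π) * (2 * Real.exp ρ * ρ ^ N / N.factorial * (2 * π)) := by gcongr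
    _ = _ := by field_simp

end
end

section
/- For every y > 0, the function x ↦ y^x / Γ(x+1) is decreasing on the interval [y, ∞). -/
lemma log_Gamma_aux {a b : ℝ} (ha : 0 < a) (hab : a < b) :
    (b - a) * Real.log a ≤ Real.log (Real.Gamma (b + 1)) - Real.log (Real.Gamma (a + 1)) := by
  have h := Real.convexOn_log_Gamma.slope_mono_adjacent (x := a) (y := a + 1) (z := b + 1)
    ha (show (0 : ℝ) < b + 1 by linarith) (by linarith) (by linarith)
  have h1 : Real.log (Real.Gamma (a + 1)) = Real.log a + Real.log (Real.Gamma a) := by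
    rw [Real.Gamma_add_one ha.ne', Real.log_mul ha.ne' (Real.Gamma_pos_of_pos ha).ne']
  simp only [Function.comp] at h
  rw [le_div_iff₀ (by linarith)] at h
  have e : (Real.log (Real.Gamma (a + 1)) - Real.log (Real.Gamma a)) / (a + 1 - a)
      = Real.log a := by
    rw [h1]; simp
  rw [e] at h
  linarith

/-- **Lemma.** For `y > 0`, the function `x ↦ y^x / Γ(x+1)` is decreasing on `[y, ∞)`. -/
theorem rpow_div_Gamma_strictAntiOn (y : ℝ) (hy : 0 < y) :
    StrictAntiOn (fun x : ℝ => y ^ x / Real.Gamma (x + 1)) (Set.Ici y) := by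
  intro a ha b hb hab
  have ha' : y ≤ a := ha
  have ha0 : 0 < a := by linarith
  have hGa : 0 < Real.Gamma (a + 1) := Real.Gamma_pos_of_pos (by linarith)
  have hGb : 0 < Real.Gamma (b + 1) := Real.Gamma_pos_of_pos (by linarith)
  obtain ⟨c, hac, hcb⟩ := exists_between hab
  have h1 := log_Gamma_aux ha0 hac
  have h2 := log_Gamma_aux (ha0.trans hac) hcb
  have l1 : Real.log y ≤ Real.log a := Real.log_le_log hy ha'
  have l2 : Real.log y < Real.log c := Real.log_lt_log hy (by linarith)
  have m1 := mul_le_mul_of_nonneg_left l1 (sub_nonneg.2 hac.le)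
  have m2 := mul_lt_mul_of_pos_left l2 (sub_pos.2 hcb)
  have pa := Real.rpow_pos_of_pos hy a
  have pb := Real.rpow_pos_of_pos hy b
  show y ^ b / Real.Gamma (b + 1) < y ^ a / Real.Gamma (a + 1)
  rw [← Real.log_lt_log_iff (div_pos pb hGb) (div_pos pa hGa),
    Real.log_div pb.ne' hGb.ne', Real.log_div pa.ne' hGa.ne', Real.log_rpow hy, Real.log_rpow hy]
  linarith
end

section
/- For all real y with y ∈ [−1,1] and y ≠ 0, and all real x: 1 + (sinh(x)/y)² ≤ exp((x/y)²). -/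
/-- **Lemma.** For `y ∈ [−1,1]`, `y ≠ 0`, and any real `x`:
`1 + (sinh x / y)² ≤ exp((x/y)²)`. -/
theorem one_add_sinh_div_sq_le_exp (y : ℝ) (hy : y ∈ Set.Icc (-1 : ℝ) 1) (hy0 : y ≠ 0)
    (x : ℝ) :
    1 + (Real.sinh x / y) ^ 2 ≤ Real.exp ((x / y) ^ 2) := by
  obtain ⟨h1, h2⟩ := hy
  have hpos : 0 < y ^ 2 := by positivity
  have ht : 1 ≤ 1 / y ^ 2 := by
    rw [le_div_iff₀ hpos]
    nlinarith
  have hs : 0 ≤ Real.sinh x ^ 2 := sq_nonneg _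
  have hc : 1 + Real.sinh x ^ 2 ≤ Real.exp (x ^ 2) := by
    have h := pow_le_pow_left₀ (Real.cosh_pos x).le (Real.cosh_le_exp_half_sq x) 2
    rw [Real.cosh_sq, ← Real.exp_nat_mul] at h
    have e : ((2 : ℕ) : ℝ) * (x ^ 2 / 2) = x ^ 2 := by push_cast; ring
    rw [e] at h
    linarith
  calc 1 + (Real.sinh x / y) ^ 2 = 1 + (1 / y ^ 2) * Real.sinh x ^ 2 := by
        rw [div_pow]; ring
    _ ≤ (1 + Real.sinh x ^ 2) ^ (1 / y ^ 2) :=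
        one_add_mul_self_le_rpow_one_add (by linarith) ht
    _ ≤ (Real.exp (x ^ 2)) ^ (1 / y ^ 2) :=
        Real.rpow_le_rpow (by linarith) hc (by linarith)
    _ = Real.exp ((x / y) ^ 2) := by
        rw [← Real.exp_mul, div_pow]; congr 1; ring
end
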